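/- Assume λ_1 = 0. Let 1 ≤ K ≤ T be integers and let P* ∈ P(R) satisfy the K-slot window constraints Σ_{k=s}^{s+K-1} ( E_{P*}[C(·, b^k)] − v ) ≤ 0 for every integer s with 0 ≤ s ≤ T − K. Then the iterates of Algorithm 1 satisfy the K-benchmark regret bound Σ_{t=1}^{T} ( E_{P^t}[C_R] − E_{P*}[C_R] ) ≤ μ (2Θ + v)² (K−1)(2K−1)/6 + (T − K) ( (1/2) K μ (4Θ² + v²) + (α/2)|R|Θ² ) + K(K−1)Θ + 2KΘ + 1/α. -/

import Mathlib

open Finset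

/-!
A proximal step minimizes a strongly convex function, so the minimizer beats a comparator `u` by a
quadratic margin. Adding the drift of the squared multiplier, the one-step regret is at most
`λ_{t+1} c_t(u) + μ M² / 2` plus the decrease of `λ_{t+1}² / (2 μ) + ‖u - x_t‖² / (2 α)`, where `M`
bounds the constraints.

The constraint on `u` holds only on windows of length `K`, so sum these inequalities over all
windows rather than over all slots. The potential telescopes along each fixed offset inside the
window. Within a window the multiplier moves by at most `μ M` per slot; freezing it at its initial
value costs `j μ M²` at offset `j`, and the frozen sum is nonpositive. Each offset misses only `K`
slots, and dividing by `K` averages the initial potential over the `K` offsets.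
-/

section Minimizers

variable {E : Type*} [NormedAddCommGroup E] {s : Set E} {p q : E}

theorem add_le_of_uniformConvexOn_of_isMinOn [NormedSpace ℝ E] {φ : ℝ → ℝ} {F : E → ℝ}
    (hF : UniformConvexOn s φ F) (hp : p ∈ s) (hmin : IsMinOn F s p) (hq : q ∈ s) :
    F p + φ ‖q - p‖ ≤ F q := by
  -- Compare `p` with `(1 - ε) p + ε q`, cancel `ε` and let `ε → 0`.
  have hseg : ∀ ε ∈ Set.Ioo (0 : ℝ) 1, F p + (1 - ε) * φ ‖q - p‖ ≤ F q := by
    rintro ε ⟨hε0, hε1⟩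
    have hmem := hF.1 hq hp hε0.le (sub_nonneg.2 hε1.le) (add_sub_cancel ε 1)
    have hle := (hmin hmem).trans
      (hF.2 hq hp hε0.le (sub_nonneg.2 hε1.le) (add_sub_cancel ε 1))
    simp only [smul_eq_mul] at hle
    refine le_of_mul_le_mul_left ?_ hε0
    linarith
  have hlim : Filter.Tendsto (fun ε : ℝ ↦ F p + (1 - ε) * φ ‖q - p‖) (nhdsWithin 0 (Set.Ioi 0))
      (nhds (F p + (1 - 0) * φ ‖q - p‖)) :=
    (Continuous.tendsto (by fun_prop) 0).mono_left nhdsWithin_le_nhds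
  simpa using le_of_tendsto hlim (Filter.mem_of_superset (Ioo_mem_nhdsGT one_pos) hseg)

variable [InnerProductSpace ℝ E] {ℓ : E → ℝ}

theorem strongConvexOn_add_mul_norm_sub_sq (hℓ : ConvexOn ℝ s ℓ) (κ : ℝ) (z : E) :
    StrongConvexOn s (2 * κ) fun x ↦ ℓ x + κ * ‖x - z‖ ^ 2 := by
  have hlin : ConvexOn ℝ s fun x ↦ -(2 * κ) * inner ℝ z x :=
    (-(2 * κ) • (innerSL ℝ z).toLinearMap).convexOn hℓ.1
  refine strongConvexOn_iff_convex.2 (((hℓ.add hlin).add_const (κ * ‖z‖ ^ 2)).congr fun x _ ↦ ?_)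
  simp only [Pi.add_apply]
  rw [norm_sub_sq_real, real_inner_comm]
  ring

theorem add_mul_norm_sub_sq_le_of_isMinOn (hℓ : ConvexOn ℝ s ℓ) {κ : ℝ} {z : E} (hp : p ∈ s)
    (hmin : IsMinOn (fun x ↦ ℓ x + κ * ‖x - z‖ ^ 2) s p) (hq : q ∈ s) :
    ℓ p + κ * ‖p - z‖ ^ 2 + κ * ‖q - p‖ ^ 2 ≤ ℓ q + κ * ‖q - z‖ ^ 2 := by
  have hgrowth :=
    add_le_of_uniformConvexOn_of_isMinOn (strongConvexOn_add_mul_norm_sub_sq hℓ κ z) hp hmin hq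
  rwa [mul_div_cancel_left₀ κ two_ne_zero] at hgrowth

end Minimizers

section Sums

theorem sum_range_natCast {𝕜 : Type*} [Field 𝕜] [CharZero 𝕜] (n : ℕ) :
    ∑ j ∈ range n, (j : 𝕜) = n * (n - 1) / 2 := by
  induction n with
  | zero => simp
  | succ n ih => rw [sum_range_succ, ih]; push_cast; ring

theorem sum_range_natCast_sq {𝕜 : Type*} [Field 𝕜] [CharZero 𝕜] (n : ℕ) :
    ∑ j ∈ range n, (j : 𝕜) ^ 2 = n * (n - 1) * (2 * n - 1) / 6 := by
  induction n with
  | zero => simp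
  | succ n ih => rw [sum_range_succ, ih]; push_cast; ring

theorem sum_range_add_le_sum_shift_add_nsmul {G : Type*} [AddCommMonoid G] [PartialOrder G]
    [IsOrderedAddMonoid G] {h : ℕ → G} {Θ : G} (hΘ : ∀ t, h t ≤ Θ) (N : ℕ) {K j : ℕ} (hj : j ≤ K) :
    ∑ t ∈ range (N + K), h t ≤ ∑ s ∈ range N, h (s + j) + K • Θ := by
  obtain ⟨i, rfl⟩ := Nat.exists_eq_add_of_le hj
  have hhead : ∑ t ∈ range j, h t ≤ j • Θ := by
    simpa using sum_le_card_nsmul (range j) h Θ fun t _ ↦ hΘ t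
  have htail : ∑ t ∈ range i, h (j + (N + t)) ≤ i • Θ := by
    simpa using sum_le_card_nsmul (range i) (fun t ↦ h (j + (N + t))) Θ fun t _ ↦ hΘ _
  calc ∑ t ∈ range (N + (j + i)), h t
      = ∑ t ∈ range j, h t + (∑ s ∈ range N, h (j + s) + ∑ t ∈ range i, h (j + (N + t))) := by
        rw [Nat.add_left_comm, sum_range_add, sum_range_add]
    _ ≤ j • Θ + (∑ s ∈ range N, h (j + s) + i • Θ) := by gcongr
    _ = ∑ s ∈ range N, h (s + j) + (j + i) • Θ := by
        simp only [add_comm j, add_smul, add_left_comm (j • Θ), add_comm (i • Θ)]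

theorem sum_mul_le_of_sum_nonpos {ι : Type*} {s : Finset ι} {w g e : ι → ℝ} {w₀ M : ℝ}
    (hw₀ : 0 ≤ w₀) (hw : ∀ i ∈ s, |w i - w₀| ≤ e i) (hg : ∀ i ∈ s, |g i| ≤ M)
    (hsum : ∑ i ∈ s, g i ≤ 0) : ∑ i ∈ s, w i * g i ≤ (∑ i ∈ s, e i) * M := by
  have herr : ∀ i ∈ s, (w i - w₀) * g i ≤ e i * M := fun i hi ↦
    (le_abs_self _).trans <| abs_mul (w i - w₀) (g i) ▸
      mul_le_mul (hw i hi) (hg i hi) (abs_nonneg _) ((abs_nonneg _).trans (hw i hi))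
  calc ∑ i ∈ s, w i * g i = w₀ * ∑ i ∈ s, g i + ∑ i ∈ s, (w i - w₀) * g i := by
        rw [mul_sum, ← sum_add_distrib]
        exact sum_congr rfl fun i _ ↦ by ring
    _ ≤ 0 + ∑ i ∈ s, e i * M :=
        add_le_add (mul_nonpos_of_nonneg_of_nonpos hw₀ hsum) (sum_le_sum herr)
    _ = (∑ i ∈ s, e i) * M := by rw [zero_add, sum_mul]

variable {h a L : ℕ → ℝ} {Θ : ℝ}

theorem sum_range_add_le_of_le_add_sub (hΘ : ∀ t, h t ≤ Θ) (hL : ∀ t, 0 ≤ L t)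
    (hstep : ∀ t, h t ≤ a t + L t - L (t + 1)) (N : ℕ) {K j : ℕ} (hj : j ≤ K) :
    ∑ t ∈ range (N + K), h t ≤ ∑ s ∈ range N, a (s + j) + L j + K * Θ := by
  have htelescope : ∑ s ∈ range N, (L (s + j) - L (s + 1 + j)) = L j - L (N + j) := by
    rw [sum_range_sub' fun s ↦ L (s + j), zero_add]
  calc ∑ t ∈ range (N + K), h t ≤ ∑ s ∈ range N, h (s + j) + K * Θ := by
        simpa using sum_range_add_le_sum_shift_add_nsmul hΘ N hj
    _ ≤ ∑ s ∈ range N, (a (s + j) + (L (s + j) - L (s + 1 + j))) + K * Θ := by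
        gcongr
        rw [← add_sub_assoc, add_right_comm]
        exact hstep (s + j)
    _ ≤ ∑ s ∈ range N, a (s + j) + L j + K * Θ := by
        rw [sum_add_distrib, htelescope]
        linarith [hL (N + j)]

theorem mul_sum_range_add_le_of_window_sum_le {A : ℝ} (hΘ : ∀ t, h t ≤ Θ) (hL : ∀ t, 0 ≤ L t)
    (hstep : ∀ t, h t ≤ a t + L t - L (t + 1)) {K N : ℕ}
    (hwin : ∀ s < N, ∑ j ∈ range K, a (s + j) ≤ A) :
    K * ∑ t ∈ range (N + K), h t ≤ N * A + ∑ j ∈ range K, L j + K * (K * Θ) := by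
  calc K * ∑ t ∈ range (N + K), h t = ∑ _j ∈ range K, ∑ t ∈ range (N + K), h t := by
        rw [sum_const, card_range, nsmul_eq_mul]
    _ ≤ ∑ j ∈ range K, (∑ s ∈ range N, a (s + j) + L j + K * Θ) :=
        sum_le_sum fun _ hj ↦
          sum_range_add_le_of_le_add_sub hΘ hL hstep N (mem_range.1 hj).le
    _ = ∑ s ∈ range N, ∑ j ∈ range K, a (s + j) + ∑ j ∈ range K, L j + K * (K * Θ) := by
        rw [sum_add_distrib, sum_add_distrib, sum_comm, sum_const, card_range, nsmul_eq_mul]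
    _ ≤ N * A + ∑ j ∈ range K, L j + K * (K * Θ) := by
        gcongr
        simpa using sum_le_card_nsmul (range N) _ A fun s hs ↦ hwin s (mem_range.1 hs)

end Sums

section PrimalDual

variable {E : Type*} [NormedAddCommGroup E]

/-- The online proximal primal-dual method (Algorithm 1) on a set `X` with cost `f` and constraints
`c t ≤ 0`: primal iterates `x`, multipliers `lam` and step sizes `α`, `μ`. The step from `x (t - 1)`
to `x t` uses the constraint `c (t - 1)`; the primal sequence starts at `x 0` and the multipliers
at `lam 1`. -/
structure IsProximalPrimalDual (X : Set E) (f : E → ℝ) (c : ℕ → E → ℝ) (α μ : ℝ) (x : ℕ → E)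
    (lam : ℕ → ℝ) : Prop where
  mem : ∀ t, x t ∈ X
  isMinOn : ∀ t, 1 ≤ t → IsMinOn
    (fun y ↦ f y + lam t * c (t - 1) y + (1 / (2 * α)) * ‖y - x (t - 1)‖ ^ 2) X (x t)
  lam_one_nonneg : 0 ≤ lam 1
  lam_succ : ∀ t, 1 ≤ t → lam (t + 1) = max 0 (lam t + μ * c (t - 1) (x t))

namespace IsProximalPrimalDual

/-- The Lyapunov function of the method relative to a comparator `u`. The multiplier is taken one
index later than the primal iterate because `lam (t + 1)` is the weight of the step from `x t`. -/
noncomputable def potential (α μ : ℝ) (x : ℕ → E) (lam : ℕ → ℝ) (u : E) (t : ℕ) : ℝ :=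
  lam (t + 1) ^ 2 / (2 * μ) + (1 / (2 * α)) * ‖u - x t‖ ^ 2

variable {X : Set E} {f : E → ℝ} {c : ℕ → E → ℝ} {α μ M D : ℝ} {x : ℕ → E} {lam : ℕ → ℝ} {u : E}

theorem potential_nonneg (hα : 0 < α) (hμ : 0 < μ) (t : ℕ) : 0 ≤ potential α μ x lam u t := by
  unfold potential
  positivity

theorem lam_succ_nonneg (H : IsProximalPrimalDual X f c α μ x lam) : ∀ t, 0 ≤ lam (t + 1)
  | 0 => H.lam_one_nonneg
  | t + 1 => H.lam_succ (t + 1) t.succ_pos ▸ le_max_left _ _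

theorem abs_lam_add_sub_le (H : IsProximalPrimalDual X f c α μ x lam) (hμ : 0 < μ)
    (hM : ∀ t, ∀ y ∈ X, |c t y| ≤ M) (s j : ℕ) :
    |lam (s + j + 1) - lam (s + 1)| ≤ j * (μ * M) := by
  have hstep : ∀ t, |lam (t + 1 + 1) - lam (t + 1)| ≤ μ * M := fun t ↦
    calc |lam (t + 1 + 1) - lam (t + 1)|
        = |max (lam (t + 1) + μ * c t (x (t + 1))) 0 - max (lam (t + 1)) 0| := by
          rw [H.lam_succ (t + 1) t.succ_pos, max_comm, max_eq_left (H.lam_succ_nonneg t),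
            Nat.add_sub_cancel]
      _ ≤ |lam (t + 1) + μ * c t (x (t + 1)) - lam (t + 1)| := abs_max_sub_max_le_abs _ _ _
      _ = μ * |c t (x (t + 1))| := by rw [add_sub_cancel_left, abs_mul, abs_of_pos hμ]
      _ ≤ μ * M := mul_le_mul_of_nonneg_left (hM t _ (H.mem _)) hμ.le
  induction j with
  | zero => simp
  | succ j ih =>
    calc |lam (s + (j + 1) + 1) - lam (s + 1)|
        ≤ |lam (s + j + 1 + 1) - lam (s + j + 1)| + |lam (s + j + 1) - lam (s + 1)| :=
          abs_sub_le _ _ _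
      _ ≤ μ * M + j * (μ * M) := add_le_add (hstep _) ih
      _ = (j + 1 : ℕ) * (μ * M) := by push_cast; ring

theorem lam_succ_sq_div_le (H : IsProximalPrimalDual X f c α μ x lam) (hμ : 0 < μ)
    (hM : ∀ t, ∀ y ∈ X, |c t y| ≤ M) (t : ℕ) :
    lam (t + 1 + 1) ^ 2 / (2 * μ) ≤
      lam (t + 1) ^ 2 / (2 * μ) + lam (t + 1) * c t (x (t + 1)) + μ * M ^ 2 / 2 := by
  have hproj : lam (t + 1 + 1) ^ 2 ≤ (lam (t + 1) + μ * c t (x (t + 1))) ^ 2 := by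
    rw [H.lam_succ (t + 1) t.succ_pos, Nat.add_sub_cancel]
    rcases max_choice 0 (lam (t + 1) + μ * c t (x (t + 1))) with h0 | h0 <;> rw [h0]
    rw [zero_pow two_ne_zero]
    exact sq_nonneg _
  have hc : c t (x (t + 1)) ^ 2 ≤ M ^ 2 :=
    sq_le_sq' (abs_le.1 (hM t _ (H.mem _))).1 (abs_le.1 (hM t _ (H.mem _))).2
  calc lam (t + 1 + 1) ^ 2 / (2 * μ)
      ≤ (lam (t + 1) + μ * c t (x (t + 1))) ^ 2 / (2 * μ) := by gcongr
    _ = lam (t + 1) ^ 2 / (2 * μ) + lam (t + 1) * c t (x (t + 1)) +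
          μ * c t (x (t + 1)) ^ 2 / 2 := by field_simp; ring
    _ ≤ _ := by gcongr

theorem sum_lam_mul_le (H : IsProximalPrimalDual X f c α μ x lam) (hμ : 0 < μ)
    (hM : ∀ t, ∀ y ∈ X, |c t y| ≤ M) (hu : u ∈ X) {K s : ℕ}
    (hwin : ∑ j ∈ range K, c (s + j) u ≤ 0) :
    ∑ j ∈ range K, lam (s + j + 1) * c (s + j) u ≤ K * (K - 1) / 2 * (μ * M ^ 2) := by
  calc ∑ j ∈ range K, lam (s + j + 1) * c (s + j) u
      ≤ (∑ j ∈ range K, j * (μ * M)) * M :=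
        sum_mul_le_of_sum_nonpos (H.lam_succ_nonneg s)
          (fun j _ ↦ H.abs_lam_add_sub_le hμ hM s j) (fun j _ ↦ hM (s + j) u hu) hwin
    _ = K * (K - 1) / 2 * (μ * M ^ 2) := by rw [← sum_mul, sum_range_natCast]; ring

theorem potential_le (H : IsProximalPrimalDual X f c α μ x lam) (hα : 0 < α) (hμ : 0 < μ)
    (hM : ∀ t, ∀ y ∈ X, |c t y| ≤ M) (hD : ∀ y ∈ X, ∀ z ∈ X, ‖y - z‖ ^ 2 ≤ D) (hu : u ∈ X)
    (j : ℕ) : potential α μ x lam u j ≤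
      lam 1 ^ 2 / (2 * μ) + D / (2 * α) + lam 1 * M * j + μ * M ^ 2 / 2 * (j : ℝ) ^ 2 := by
  have hlam : lam (j + 1) ≤ lam 1 + j * (μ * M) := by
    have hdrift := (abs_le.1 (H.abs_lam_add_sub_le hμ hM 0 j)).2
    rw [zero_add, zero_add] at hdrift
    linarith
  calc potential α μ x lam u j
      ≤ (lam 1 + j * (μ * M)) ^ 2 / (2 * μ) + (1 / (2 * α)) * D := by
        unfold potential
        gcongr
        · exact H.lam_succ_nonneg j
        · exact hD u hu _ (H.mem j)
    _ = _ := by field_simp; ring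

theorem sum_potential_le (H : IsProximalPrimalDual X f c α μ x lam) (hα : 0 < α) (hμ : 0 < μ)
    (hM : ∀ t, ∀ y ∈ X, |c t y| ≤ M) (hD : ∀ y ∈ X, ∀ z ∈ X, ‖y - z‖ ^ 2 ≤ D) (hu : u ∈ X)
    (K : ℕ) : ∑ j ∈ range K, potential α μ x lam u j ≤
      K * (lam 1 ^ 2 / (2 * μ) + D / (2 * α) + lam 1 * M * (K - 1) / 2 +
        μ * M ^ 2 * (K - 1) * (2 * K - 1) / 12) := by
  refine (sum_le_sum fun j _ ↦ H.potential_le hα hμ hM hD hu j).trans_eq ?_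
  rw [sum_add_distrib, sum_add_distrib, ← mul_sum, ← mul_sum, sum_range_natCast,
    sum_range_natCast_sq, sum_const, card_range, nsmul_eq_mul]
  ring

variable [InnerProductSpace ℝ E]

theorem sub_le_lam_mul_add_potential_sub (H : IsProximalPrimalDual X f c α μ x lam) (hα : 0 < α)
    (hμ : 0 < μ) (hf : ConvexOn ℝ X f) (hc : ∀ t, ConvexOn ℝ X (c t))
    (hM : ∀ t, ∀ y ∈ X, |c t y| ≤ M) (hu : u ∈ X) (t : ℕ) :
    f (x (t + 1)) - f u ≤ lam (t + 1) * c t u + μ * M ^ 2 / 2 +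
      potential α μ x lam u t - potential α μ x lam u (t + 1) := by
  have hprox := add_mul_norm_sub_sq_le_of_isMinOn
    (hf.add ((hc t).smul (H.lam_succ_nonneg t))) (H.mem (t + 1))
    (H.isMinOn (t + 1) t.succ_pos) hu
  simp only [Pi.add_apply, smul_eq_mul, Nat.add_sub_cancel] at hprox
  have hdrift := H.lam_succ_sq_div_le hμ hM t
  have hmove : 0 ≤ (1 / (2 * α)) * ‖x (t + 1) - x t‖ ^ 2 := by positivity
  unfold potential
  linarith

theorem sum_range_sub_le {Θ : ℝ} (H : IsProximalPrimalDual X f c α μ x lam) (hα : 0 < α)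
    (hμ : 0 < μ) (hf : ConvexOn ℝ X f) (hc : ∀ t, ConvexOn ℝ X (c t))
    (hΘ : ∀ y ∈ X, ∀ z ∈ X, f y - f z ≤ Θ) (hM : ∀ t, ∀ y ∈ X, |c t y| ≤ M)
    (hD : ∀ y ∈ X, ∀ z ∈ X, ‖y - z‖ ^ 2 ≤ D) (hu : u ∈ X) {K N : ℕ} (hK : 1 ≤ K)
    (hwin : ∀ s < N, ∑ j ∈ range K, c (s + j) u ≤ 0) :
    ∑ t ∈ range (N + K), (f (x (t + 1)) - f u) ≤
      lam 1 ^ 2 / (2 * μ) + D / (2 * α) + lam 1 * M * (K - 1) / 2 +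
        μ * M ^ 2 * (K - 1) * (2 * K - 1) / 12 + N * (K * μ * M ^ 2 / 2) + K * Θ := by
  have hK0 : (0 : ℝ) < K := by exact_mod_cast hK
  have hwindow : ∀ s < N, ∑ j ∈ range K, (lam (s + j + 1) * c (s + j) u + μ * M ^ 2 / 2) ≤
      K * (K * μ * M ^ 2 / 2) := fun s hs ↦ by
    rw [sum_add_distrib, sum_const, card_range, nsmul_eq_mul]
    linarith [H.sum_lam_mul_le hμ hM hu (hwin s hs)]
  have havg := mul_sum_range_add_le_of_window_sum_le (fun t ↦ hΘ _ (H.mem (t + 1)) u hu)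
    (potential_nonneg hα hμ) (H.sub_le_lam_mul_add_potential_sub hα hμ hf hc hM hu) hwindow
  have hinit := H.sum_potential_le hα hμ hM hD hu K
  refine le_of_mul_le_mul_left ?_ hK0
  linarith

end IsProximalPrimalDual

theorem stmt9_general [InnerProductSpace ℝ E] {X : Set E} {f : E → ℝ} {c : ℕ → E → ℝ}
    {α μ M D Θ : ℝ} {x : ℕ → E} {lam : ℕ → ℝ} {u : E} (hα : 0 < α) (hμ : 0 < μ)
    (hf : ConvexOn ℝ X f) (hc : ∀ t, ConvexOn ℝ X (c t))
    (hΘ : ∀ y ∈ X, ∀ z ∈ X, f y - f z ≤ Θ) (hM : ∀ t, ∀ y ∈ X, |c t y| ≤ M)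
    (hD : ∀ y ∈ X, ∀ z ∈ X, ‖y - z‖ ^ 2 ≤ D) (H : IsProximalPrimalDual X f c α μ x lam)
    {K T : ℕ} (hK : 1 ≤ K) (hKT : K ≤ T) (hu : u ∈ X)
    (hwin : ∀ s < T - K, ∑ k ∈ Icc s (s + K - 1), c k u ≤ 0) :
    ∑ t ∈ Icc 1 T, (f (x t) - f u) ≤
      lam 1 ^ 2 / (2 * μ) + D / (2 * α) + lam 1 * M * (K - 1) / 2 +
        μ * M ^ 2 * (K - 1) * (2 * K - 1) / 12 + (T - K) * (K * μ * M ^ 2 / 2) + K * Θ := by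
  obtain ⟨N, rfl⟩ := Nat.exists_eq_add_of_le' hKT
  have hwin' : ∀ s < N, ∑ j ∈ range K, c (s + j) u ≤ 0 := fun s hs ↦ by
    have hs := hwin s (by rwa [Nat.add_sub_cancel])
    rwa [Icc_sub_one_right_eq_Ico_of_not_isMin (not_isMin_of_lt (show 0 < s + K by lia)),
      sum_Ico_eq_sum_range, Nat.add_sub_cancel_left] at hs
  have hbound := H.sum_range_sub_le hα hμ hf hc hΘ hM hD hu hK hwin'
  rw [range_eq_Ico, sum_Ico_add' (fun t ↦ f (x t) - f u)] at hbound
  simpa [← Ico_add_one_right_eq_Icc] using hbound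

end PrimalDual

section Simplex

variable {R : Type*} [Fintype R]

variable (R) in
/-- The space `P(R)` of probability vectors on `R`, that is, Mathlib's `stdSimplex` carried over to
`EuclideanSpace` so that `‖·‖` is the Euclidean norm rather than the sup norm. -/
def probSimplex : Set (EuclideanSpace ℝ R) := WithLp.ofLp ⁻¹' stdSimplex ℝ R

theorem convex_probSimplex : Convex ℝ (probSimplex R) :=
  (convex_stdSimplex ℝ R).linear_preimage (WithLp.linearEquiv 2 ℝ (R → ℝ)).toLinearMap

theorem norm_sub_sq_le_of_mem_probSimplex {p q : EuclideanSpace ℝ R} (hp : p ∈ probSimplex R)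
    (hq : q ∈ probSimplex R) : ‖p - q‖ ^ 2 ≤ 2 := by
  have hcoord : ∀ a, (p a - q a) ^ 2 ≤ p a + q a := fun a ↦ by
    obtain ⟨hp0, hp1⟩ := mem_Icc_of_mem_stdSimplex hp a
    obtain ⟨hq0, hq1⟩ := mem_Icc_of_mem_stdSimplex hq a
    nlinarith [mul_nonneg hp0 hq0]
  calc ‖p - q‖ ^ 2 = ∑ a, (p a - q a) ^ 2 := EuclideanSpace.real_norm_sq_eq _
    _ ≤ ∑ a, (p a + q a) := sum_le_sum fun a _ ↦ hcoord a
    _ = 2 := by rw [sum_add_distrib, hp.2, hq.2, one_add_one_eq_two]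

theorem convexOn_sum_mul {X : Set (EuclideanSpace ℝ R)} (hX : Convex ℝ X) (w : R → ℝ) :
    ConvexOn ℝ X fun p ↦ ∑ a, p a * w a := by
  refine ⟨hX, fun p _ q _ s t _ _ _ ↦ le_of_eq ?_⟩
  simp only [PiLp.add_apply, PiLp.smul_apply, smul_eq_mul, mul_sum, ← sum_add_distrib]
  exact sum_congr rfl fun a _ ↦ by ring

theorem sum_mul_mem_Icc_of_mem_probSimplex {p : EuclideanSpace ℝ R} (hp : p ∈ probSimplex R)
    {w : R → ℝ} {m B : ℝ} (hw : ∀ a, w a ∈ Set.Icc m B) : ∑ a, p a * w a ∈ Set.Icc m B :=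
  (convex_Icc m B).sum_mem (fun a _ ↦ hp.1 a) hp.2 fun a _ ↦ hw a

theorem abs_sum_mul_sub_le_max {p : EuclideanSpace ℝ R} (hp : p ∈ probSimplex R) {w : R → ℝ}
    {B v : ℝ} (hw : ∀ a, w a ∈ Set.Icc 0 B) (hv : 0 ≤ v) : |∑ a, p a * w a - v| ≤ max B v := by
  obtain ⟨hlower, hupper⟩ := sum_mul_mem_Icc_of_mem_probSimplex hp hw
  exact abs_le.2 ⟨by linarith [le_max_right B v], by linarith [le_max_left B v]⟩

end Simplex

theorem max_sq_le_sq_add_sq (a b : ℝ) : max a b ^ 2 ≤ a ^ 2 + b ^ 2 := by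
  rcases max_choice a b with hmax | hmax <;> rw [hmax]
  · exact le_add_of_nonneg_right (sq_nonneg b)
  · exact le_add_of_nonneg_left (sq_nonneg a)

theorem sharp_regret_bound_le {Θ v α μ k n r : ℝ} (hΘ : 0 ≤ Θ) (hv : 0 ≤ v) (hα : 0 ≤ α)
    (hμ : 0 ≤ μ) (hk : 1 ≤ k) (hn : 0 ≤ n) (hr : 0 ≤ r) :
    2 / (2 * α) + μ * max (2 * Θ) v ^ 2 * (k - 1) * (2 * k - 1) / 12 +
        n * (k * μ * max (2 * Θ) v ^ 2 / 2) + k * Θ ≤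
      μ * (2 * Θ + v) ^ 2 * (k - 1) * (2 * k - 1) / 6 +
        n * ((1 / 2) * k * μ * (4 * Θ ^ 2 + v ^ 2) + (α / 2) * r * Θ ^ 2) +
        k * (k - 1) * Θ + 2 * k * Θ + 1 / α := by
  have : 0 ≤ k - 1 := by linarith
  have hk1 : 0 ≤ 2 * k - 1 := by linarith
  have hM : max (2 * Θ) v ^ 2 ≤ 4 * Θ ^ 2 + v ^ 2 :=
    (max_sq_le_sq_add_sq (2 * Θ) v).trans_eq (by ring)
  have : max (2 * Θ) v ^ 2 ≤ (2 * Θ + v) ^ 2 := by nlinarith [mul_nonneg hΘ hv]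
  have hstart : μ * max (2 * Θ) v ^ 2 * (k - 1) * (2 * k - 1) / 12 ≤
      μ * (2 * Θ + v) ^ 2 * (k - 1) * (2 * k - 1) / 6 := by
    gcongr
    norm_num
  have hwindow : k * μ * max (2 * Θ) v ^ 2 / 2 ≤
      (1 / 2) * k * μ * (4 * Θ ^ 2 + v ^ 2) + (α / 2) * r * Θ ^ 2 := by
    have hmul := mul_le_mul_of_nonneg_left hM (show 0 ≤ (1 / 2) * k * μ by positivity)
    have hextra : 0 ≤ (α / 2) * r * Θ ^ 2 := by positivity
    linarith
  have hslots : k * Θ ≤ k * (k - 1) * Θ + 2 * k * Θ := by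
    have hmissed : 0 ≤ k * (k - 1) * Θ + k * Θ := by positivity
    linarith
  have hdiam : 2 / (2 * α) = 1 / α := by
    rw [← mul_div_mul_left 1 α two_ne_zero, mul_one]
  linarith [mul_le_mul_of_nonneg_left hwindow hn]

theorem stmt9
    {R : Type*} [Fintype R] [Nonempty R]
    (CR : R → ℝ) (CV CT : R → R → ℝ) (Θ v α μ : ℝ)
    (hΘ : 0 < Θ) (hv : 0 < v) (hα : 0 < α) (hμ : 0 < μ)
    (hCR : ∀ a : R, 0 ≤ CR a ∧ CR a ≤ Θ)
    (hCV : ∀ a c : R, 0 ≤ CV a c ∧ CV a c ≤ Θ)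
    (hCT : ∀ a c : R, 0 ≤ CT a c ∧ CT a c ≤ Θ)
    (b : ℕ → R) (P : ℕ → EuclideanSpace ℝ R) (lam : ℕ → ℝ)
    (hP0 : (∀ a : R, 0 ≤ P 0 a) ∧ ∑ a : R, P 0 a = 1)
    (hlam1 : lam 1 = 0)
    (hPmem : ∀ t : ℕ, 1 ≤ t → (∀ a : R, 0 ≤ P t a) ∧ ∑ a : R, P t a = 1)
    (hPmin : ∀ t : ℕ, 1 ≤ t → ∀ Q : EuclideanSpace ℝ R,
      ((∀ a : R, 0 ≤ Q a) ∧ ∑ a : R, Q a = 1) →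
      (∑ a : R, P t a * CR a) +
        lam t * ((∑ a : R, P t a * (CV a (b (t-1)) + CT a (b (t-1)))) - v) +
        (1/(2*α)) * ‖P t - P (t-1)‖^2 ≤
      (∑ a : R, Q a * CR a) +
        lam t * ((∑ a : R, Q a * (CV a (b (t-1)) + CT a (b (t-1)))) - v) +
        (1/(2*α)) * ‖Q - P (t-1)‖^2)
    (hlam : ∀ t : ℕ, 1 ≤ t →
      lam (t+1) = max 0 (lam t + μ * ((∑ a : R, P t a * (CV a (b (t-1)) + CT a (b (t-1)))) - v)))
    (K T : ℕ) (hK : 1 ≤ K) (hKT : K ≤ T)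
    (Pstar : EuclideanSpace ℝ R)
    (hPstar : (∀ a : R, 0 ≤ Pstar a) ∧ ∑ a : R, Pstar a = 1)
    (hwin : ∀ s : ℕ, s ≤ T - K →
      ∑ k ∈ Finset.Icc s (s + K - 1),
        ((∑ a : R, Pstar a * (CV a (b k) + CT a (b k))) - v) ≤ 0) :
    ∑ t ∈ Finset.Icc 1 T, ((∑ a : R, P t a * CR a) - (∑ a : R, Pstar a * CR a)) ≤
      μ * (2*Θ + v)^2 * ((K:ℝ) - 1) * (2*(K:ℝ) - 1) / 6 +
      ((T:ℝ) - (K:ℝ)) * ((1/2) * (K:ℝ) * μ * (4*Θ^2 + v^2) + (α/2) * (Fintype.card R : ℝ) * Θ^2) +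
      (K:ℝ) * ((K:ℝ) - 1) * Θ + 2*(K:ℝ)*Θ + 1/α := by
  have hC : ∀ t a, CV a (b t) + CT a (b t) ∈ Set.Icc 0 (2 * Θ) := fun t a ↦
    two_mul Θ ▸ ⟨add_nonneg (hCV a _).1 (hCT a _).1, add_le_add (hCV a _).2 (hCT a _).2⟩
  have hregret := stmt9_general hα hμ (convexOn_sum_mul convex_probSimplex CR)
    (fun t ↦ (convexOn_sum_mul convex_probSimplex fun a ↦ CV a (b t) + CT a (b t)).add_const (-v))
    (fun _ hy _ hz ↦ (sub_le_self _ (sum_mul_mem_Icc_of_mem_probSimplex hz hCR).1).trans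
      (sum_mul_mem_Icc_of_mem_probSimplex hy hCR).2)
    (fun t _ hy ↦ abs_sum_mul_sub_le_max hy (hC t) hv.le)
    (fun _ hy _ hz ↦ norm_sub_sq_le_of_mem_probSimplex hy hz)
    ⟨fun t ↦ t.eq_zero_or_pos.elim (· ▸ hP0) (hPmem t), hPmin, hlam1.ge, hlam⟩
    hK hKT hPstar fun s hs ↦ hwin s hs.le
  simp only [hlam1, zero_pow two_ne_zero, zero_div, zero_mul, zero_add, add_zero] at hregret
  exact hregret.trans <| sharp_regret_bound_le hΘ.le hv.le hα.le hμ.le (Nat.one_le_cast.2 hK)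
    (sub_nonneg.2 (Nat.cast_le.2 hKT)) (Nat.cast_nonneg _)
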